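/- arXiv:1106.2213 — 2 statements merged into one kernel-verified Lean document; each statement's English description precedes it below -/
import Mathlib

section
/- Let Ω ⊆ [0,∞) be an interval, let f be a doubly concave function on Ω, and let p ∈ (0,1]. Then the function t ↦ (f(t^{1/p}))^p is concave on the interval Ω^p := {t^p : t ∈ Ω}. -/
open scoped ComplexOrder

section Defs

variable {n : ℕ}

/-- eigenvalues of a Hermitian matrix listed in increasing order -/
noncomputable def eigUp {A : Matrix (Fin n) (Fin n) ℂ} (hA : A.IsHermitian) : Fin n → ℝ :=
  fun i => hA.eigenvalues (Tuple.sort hA.eigenvalues i)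

/-- eigenvalues of a Hermitian matrix listed in decreasing order: `eigDown hA i = μ_{i+1}(A)` -/
noncomputable def eigDown {A : Matrix (Fin n) (Fin n) ℂ} (hA : A.IsHermitian) : Fin n → ℝ :=
  fun i => eigUp hA i.rev

/-- the product of the `k` smallest eigenvalues, `∏_{j=1}^k μ_{n+1-j}(A)` -/
noncomputable def prodSmall (A : Matrix (Fin n) (Fin n) ℂ) (k : ℕ) : ℝ :=
  if hA : A.IsHermitian then
    ∏ i ∈ Finset.univ.filter (fun i : Fin n => (i : ℕ) < k), eigUp hA i
  else 0

/-- the product of the `k` largest eigenvalues, `∏_{j=1}^k μ_j(A)` -/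
noncomputable def prodLarge (A : Matrix (Fin n) (Fin n) ℂ) (k : ℕ) : ℝ :=
  if hA : A.IsHermitian then
    ∏ i ∈ Finset.univ.filter (fun i : Fin n => (i : ℕ) < k), eigDown hA i
  else 0

/-- the sum of the `k` smallest eigenvalues, `∑_{j=1}^k μ_{n+1-j}(A)` -/
noncomputable def sumSmall (A : Matrix (Fin n) (Fin n) ℂ) (k : ℕ) : ℝ :=
  if hA : A.IsHermitian then
    ∑ i ∈ Finset.univ.filter (fun i : Fin n => (i : ℕ) < k), eigUp hA i
  else 0

/-- A doubly concave function on an interval `Ω ⊆ [0,∞)`. -/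
structure DoublyConcaveOn (f : ℝ → ℝ) (Ω : Set ℝ) : Prop where
  subset_Ici : Ω ⊆ Set.Ici (0 : ℝ)
  nonneg : ∀ x ∈ Ω, 0 ≤ f x
  continuousOn : ContinuousOn f Ω
  concaveOn : ConcaveOn ℝ Ω f
  geomConcave : ∀ x ∈ Ω, ∀ y ∈ Ω, Real.sqrt (f x * f y) ≤ f (Real.sqrt (x * y))

/-- `𝔼_p(Z) := (𝔼(Z^p))^{1/p}` -/
noncomputable def Ep {n m : ℕ} (E : Matrix (Fin n) (Fin n) ℂ →ₗ[ℂ] Matrix (Fin m) (Fin m) ℂ)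
    (p : ℝ) (Z : Matrix (Fin n) (Fin n) ℂ) : Matrix (Fin m) (Fin m) ℂ :=
  cfc (fun x : ℝ => x ^ (1 / p)) (E (cfc (fun x : ℝ => x ^ p) Z))

/-- the power `p`-mean `A β_p B := ((A^p + B^p)/2)^{1/p}` -/
noncomputable def betaP (p : ℝ) (A B : Matrix (Fin n) (Fin n) ℂ) : Matrix (Fin n) (Fin n) ℂ :=
  cfc (fun x : ℝ => x ^ (1 / p))
    ((2 : ℂ)⁻¹ • (cfc (fun x : ℝ => x ^ p) A + cfc (fun x : ℝ => x ^ p) B))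

noncomputable def sqrtM (A : Matrix (Fin n) (Fin n) ℂ) : Matrix (Fin n) (Fin n) ℂ :=
  cfc Real.sqrt A

noncomputable def invSqrtM (A : Matrix (Fin n) (Fin n) ℂ) : Matrix (Fin n) (Fin n) ℂ :=
  cfc (fun x : ℝ => (Real.sqrt x)⁻¹) A

/-- operator mean with representing function `h`: `A σ B = A^{1/2} h(A^{-1/2} B A^{-1/2}) A^{1/2}` -/
noncomputable def opMean (h : ℝ → ℝ) (A B : Matrix (Fin n) (Fin n) ℂ) :
    Matrix (Fin n) (Fin n) ℂ :=
  sqrtM A * cfc h (invSqrtM A * B * invSqrtM A) * sqrtM A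

/-- the weighted geometric mean `A #_α B` -/
noncomputable def sharp (α : ℝ) (A B : Matrix (Fin n) (Fin n) ℂ) : Matrix (Fin n) (Fin n) ℂ :=
  sqrtM A * cfc (fun x : ℝ => x ^ α) (invSqrtM A * B * invSqrtM A) * sqrtM A

/-- the (real) determinant of a Hermitian matrix -/
noncomputable def rdet (A : Matrix (Fin n) (Fin n) ℂ) : ℝ := (A.det).re

open Classical in
/-- the derived anti-norm `‖A‖_! = ‖A^{-p}‖^{-1/p}` for invertible positive `A`, `0` otherwise. -/
noncomputable def derivedAntiNorm (N : Matrix (Fin n) (Fin n) ℂ → ℝ) (p : ℝ)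
    (A : Matrix (Fin n) (Fin n) ℂ) : ℝ :=
  if IsUnit A.det then (N (cfc (fun x : ℝ => x ^ (-p)) A)) ^ (-(1 / p)) else 0

end Defs

/-!
Let `z` be the weighted power mean of `x < y` with exponent `p ≤ 1`. By concavity `f` lies above
its chord on `[x, y]`; by concavity of `u ↦ log (f (exp u))` it also lies above the power function
`C * t ^ k` through the two endpoint values, when these and `x` are positive. For one of the two
interpolants `φ`, the power mean of `φ x` and `φ y` is at most `φ z`. For an affine `φ` of
nonpositive slope or nonpositive intercept this is the reverse Minkowski inequality. An affine
interpolant of positive slope and intercept has `φ y / φ x` between `1` and `y / x`, so that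
`0 ≤ k ≤ 1`, and then the inequality for `C * t ^ k` is the concavity of `t ↦ t ^ k`.
-/

open Set

section PowerMean

/-- The power mean of two numbers with exponent `p` and weights `a`, `b`. Concavity of
`t ↦ f (t ^ (1 / p)) ^ p` says that the power mean of two values of `f` is at most `f` at the power
mean of the arguments. The weights are not required to sum to `1`. -/
noncomputable def powerMean (p a b x y : ℝ) : ℝ :=
  (a * x ^ p + b * y ^ p) ^ (1 / p)

variable {p a b x y u v : ℝ}

lemma powerMean_self (hp : p ≠ 0) (hab : a + b = 1) (hx : 0 ≤ x) : powerMean p a b x x = x := by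
  rw [powerMean, ← add_mul, hab, one_mul, one_div, Real.rpow_rpow_inv hx hp]

lemma powerMean_mul_left (hp : p ≠ 0) (ha : 0 ≤ a) (hb : 0 ≤ b) (hu : 0 ≤ u) (hx : 0 ≤ x)
    (hy : 0 ≤ y) : powerMean p a b (u * x) (u * y) = u * powerMean p a b x y := by
  have hfactor : a * (u * x) ^ p + b * (u * y) ^ p = u ^ p * (a * x ^ p + b * y ^ p) := by
    rw [Real.mul_rpow hu hx, Real.mul_rpow hu hy]
    ring
  rw [powerMean, hfactor, Real.mul_rpow (by positivity) (by positivity), one_div,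
    Real.rpow_rpow_inv hu hp, powerMean, one_div]

lemma powerMean_mono (hp : 0 ≤ p) (ha : 0 ≤ a) (hb : 0 ≤ b) (hx : 0 ≤ x) (hy : 0 ≤ y)
    (hxu : x ≤ u) (hyv : y ≤ v) : powerMean p a b x y ≤ powerMean p a b u v := by
  unfold powerMean
  gcongr

lemma powerMean_mem_Icc (hp : 0 < p) (ha : 0 ≤ a) (hb : 0 ≤ b) (hab : a + b = 1) (hx : 0 ≤ x)
    (hxy : x ≤ y) : powerMean p a b x y ∈ Icc x y := by
  have hy := hx.trans hxy
  constructor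
  · simpa only [powerMean_self hp.ne' hab hx] using powerMean_mono hp.le ha hb hx hx le_rfl hxy
  · simpa only [powerMean_self hp.ne' hab hy] using powerMean_mono hp.le ha hb hx hy hxy le_rfl

/- Minkowski's inequality in `ℓ^(1/p)` for the two vectors `a • (x ^ p, u ^ p)` and
`b • (y ^ p, v ^ p)`. -/
lemma powerMean_add_powerMean_le (hp0 : 0 < p) (hp1 : p ≤ 1) (ha : 0 ≤ a) (hb : 0 ≤ b)
    (hx : 0 ≤ x) (hy : 0 ≤ y) (hu : 0 ≤ u) (hv : 0 ≤ v) :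
    powerMean p a b x y + powerMean p a b u v ≤ powerMean p a b (x + u) (y + v) := by
  have norm_smul_rpow : ∀ c r s : ℝ, 0 ≤ c → 0 ≤ r → 0 ≤ s →
      ((c * r ^ p) ^ (1 / p) + (c * s ^ p) ^ (1 / p)) ^ p = c * (r + s) ^ p := by
    intro c r s hc hr hs
    rw [Real.mul_rpow hc (by positivity), Real.mul_rpow hc (by positivity), one_div,
      Real.rpow_rpow_inv hr hp0.ne', Real.rpow_rpow_inv hs hp0.ne', ← mul_add,
      Real.mul_rpow (by positivity) (by positivity), Real.rpow_inv_rpow hc hp0.ne']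
  have pair_nonneg : ∀ r s : ℝ, 0 ≤ r → 0 ≤ s → ∀ i ∈ Finset.univ, 0 ≤ ![r, s] i :=
    fun r s hr hs i _ => by fin_cases i <;> assumption
  have minkowski := Real.Lp_add_le_of_nonneg Finset.univ (p := 1 / p)
    (f := ![a * x ^ p, a * u ^ p]) (g := ![b * y ^ p, b * v ^ p]) (one_le_one_div hp0 hp1)
    (pair_nonneg _ _ (by positivity) (by positivity))
    (pair_nonneg _ _ (by positivity) (by positivity))
  simp only [Fin.sum_univ_two, Matrix.cons_val_zero, Matrix.cons_val_one, one_div_one_div,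
    norm_smul_rpow a x u ha hx hu, norm_smul_rpow b y v hb hy hv] at minkowski
  rw [powerMean, powerMean, powerMean, one_div,
    Real.le_rpow_inv_iff_of_pos (by positivity) (by positivity) hp0, ← one_div]
  exact minkowski

lemma powerMean_rpow_le {k : ℝ} (hp : 0 < p) (ha : 0 ≤ a) (hb : 0 ≤ b) (hab : a + b = 1)
    (hx : 0 ≤ x) (hy : 0 ≤ y) (hk0 : 0 ≤ k) (hk1 : k ≤ 1) :
    powerMean p a b (x ^ k) (y ^ k) ≤ powerMean p a b x y ^ k := by
  have rpow_comm : ∀ r : ℝ, 0 ≤ r → ∀ s t : ℝ, (r ^ s) ^ t = (r ^ t) ^ s := fun r hr s t => by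
    rw [← Real.rpow_mul hr, mul_comm, Real.rpow_mul hr]
  have jensen : a * (x ^ p) ^ k + b * (y ^ p) ^ k ≤ (a * x ^ p + b * y ^ p) ^ k :=
    (Real.concaveOn_rpow hk0 hk1).2 (Real.rpow_nonneg hx p) (Real.rpow_nonneg hy p) ha hb hab
  rw [powerMean, rpow_comm x hx k p, rpow_comm y hy k p, powerMean,
    rpow_comm _ (by positivity) (1 / p) k]
  gcongr

lemma powerMean_affine_le_of_slope_nonpos {α β : ℝ} (hp0 : 0 < p) (hp1 : p ≤ 1) (ha : 0 ≤ a)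
    (hb : 0 ≤ b) (hab : a + b = 1) (hx : 0 ≤ x) (hy : 0 ≤ y) (hα : α ≤ 0)
    (hαx : 0 ≤ α * x + β) (hαy : 0 ≤ α * y + β) :
    powerMean p a b (α * x + β) (α * y + β) ≤ α * powerMean p a b x y + β := by
  have hα' : 0 ≤ -α := neg_nonneg.2 hα
  have hβ : 0 ≤ β := by linarith [mul_nonneg hα' hx]
  have superadd := powerMean_add_powerMean_le hp0 hp1 ha hb hαx hαy
    (mul_nonneg hα' hx) (mul_nonneg hα' hy)
  rw [powerMean_mul_left hp0.ne' ha hb hα' hx hy, show α * x + β + -α * x = β by ring,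
    show α * y + β + -α * y = β by ring, powerMean_self hp0.ne' hab hβ] at superadd
  linarith

lemma powerMean_affine_le_of_intercept_nonpos {α β : ℝ} (hp0 : 0 < p) (hp1 : p ≤ 1) (ha : 0 ≤ a)
    (hb : 0 ≤ b) (hab : a + b = 1) (hx : 0 ≤ x) (hy : 0 ≤ y) (hα : 0 ≤ α) (hβ : β ≤ 0)
    (hαx : 0 ≤ α * x + β) (hαy : 0 ≤ α * y + β) :
    powerMean p a b (α * x + β) (α * y + β) ≤ α * powerMean p a b x y + β := by
  have hβ' : 0 ≤ -β := neg_nonneg.2 hβ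
  have superadd := powerMean_add_powerMean_le hp0 hp1 ha hb hαx hαy hβ' hβ'
  rw [powerMean_self hp0.ne' hab hβ', add_neg_cancel_right, add_neg_cancel_right,
    powerMean_mul_left hp0.ne' ha hb hα hx hy] at superadd
  linarith

lemma powerMean_const_mul_rpow_le {C k : ℝ} (hp : 0 < p) (ha : 0 ≤ a) (hb : 0 ≤ b)
    (hab : a + b = 1) (hx : 0 ≤ x) (hy : 0 ≤ y) (hC : 0 ≤ C) (hk0 : 0 ≤ k) (hk1 : k ≤ 1) :
    powerMean p a b (C * x ^ k) (C * y ^ k) ≤ C * powerMean p a b x y ^ k := by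
  rw [powerMean_mul_left hp.ne' ha hb hC (by positivity) (by positivity)]
  gcongr
  exact powerMean_rpow_le hp ha hb hab hx hy hk0 hk1

end PowerMean

section MidpointConcave

/- At the leftmost minimum point `c`, midpoint concavity on an interval centred at `c` would force
the minimum to be attained further left. -/
lemma nonneg_of_mem_Icc_of_midpoint_le {h : ℝ → ℝ} {a b : ℝ} (hcont : ContinuousOn h (Icc a b))
    (hmid : ∀ x ∈ Icc a b, ∀ y ∈ Icc a b, midpoint ℝ (h x) (h y) ≤ h (midpoint ℝ x y))
    (ha : 0 ≤ h a) (hb : 0 ≤ h b) {t : ℝ} (ht : t ∈ Icc a b) : 0 ≤ h t := by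
  obtain ⟨d, hd, hmin⟩ := isCompact_Icc.exists_isMinOn ⟨t, ht⟩ hcont
  have hcompact : IsCompact (Icc a b ∩ h ⁻¹' {h d}) :=
    isCompact_Icc.of_isClosed_subset
      (hcont.preimage_isClosed_of_isClosed isClosed_Icc isClosed_singleton) inter_subset_left
  obtain ⟨c, ⟨hc, hcd : h c = h d⟩, hleast⟩ := hcompact.exists_isLeast ⟨d, hd, rfl⟩
  refine le_trans ?_ (hmin ht)
  by_contra! hneg
  have hac : a < c := hc.1.lt_of_ne (by rintro rfl; linarith)
  have hcb : c < b := hc.2.lt_of_ne (by rintro rfl; linarith)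
  obtain ⟨δ, hδ, hδ'⟩ : ∃ δ > 0, δ ≤ c - a ∧ δ ≤ b - c :=
    ⟨min (c - a) (b - c), lt_min (sub_pos.2 hac) (sub_pos.2 hcb), min_le_left _ _, min_le_right _ _⟩
  have hleft : c - δ ∈ Icc a b := ⟨by linarith, by linarith⟩
  have hright : c + δ ∈ Icc a b := ⟨by linarith, by linarith⟩
  have hlt : h d < h (c - δ) :=
    (hmin hleft).lt_of_ne fun heq => by linarith [hleast ⟨hleft, heq.symm⟩]
  have hle : h d ≤ h (c + δ) := hmin hright
  have hcenter := hmid _ hleft _ hright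
  rw [midpoint_sub_add, midpoint_eq_smul_add, smul_eq_mul, hcd] at hcenter
  norm_num at hcenter
  linarith

lemma concaveOn_of_continuousOn_of_midpoint_le {E : Type*} [AddCommGroup E] [Module ℝ E]
    [TopologicalSpace E] [IsTopologicalAddGroup E] [ContinuousSMul ℝ E] {s : Set E} {f : E → ℝ}
    (hs : Convex ℝ s) (hcont : ContinuousOn f s)
    (hmid : ∀ x ∈ s, ∀ y ∈ s, midpoint ℝ (f x) (f y) ≤ f (midpoint ℝ x y)) :
    ConcaveOn ℝ s f := by
  refine ⟨hs, fun x hx y hy a b ha hb hab => ?_⟩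
  let γ : ℝ →ᵃ[ℝ] E := AffineMap.lineMap x y
  let chord : ℝ →ᵃ[ℝ] ℝ := AffineMap.lineMap (f x) (f y)
  have hγ : MapsTo γ (Icc 0 1) s := fun t ht => hs.lineMap_mem hx hy ht
  have hγcont : Continuous γ := AffineMap.lineMap_continuous
  have hchord : Continuous chord := AffineMap.lineMap_continuous
  have hnonneg : 0 ≤ f (γ b) - chord b := by
    refine nonneg_of_mem_Icc_of_midpoint_le (h := fun t => f (γ t) - chord t) (a := 0) (b := 1)
      ((hcont.comp hγcont.continuousOn hγ).sub hchord.continuousOn) (fun t ht r hr => ?_)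
      (by simp [γ, chord]) (by simp [γ, chord]) ⟨hb, by linarith⟩
    calc midpoint ℝ (f (γ t) - chord t) (f (γ r) - chord r)
        = midpoint ℝ (f (γ t)) (f (γ r)) - midpoint ℝ (chord t) (chord r) := by
          simp only [midpoint_eq_smul_add, smul_eq_mul]
          ring
      _ ≤ f (γ (midpoint ℝ t r)) - chord (midpoint ℝ t r) := by
          rw [AffineMap.map_midpoint, AffineMap.map_midpoint]
          exact sub_le_sub_right (hmid _ (hγ ht) _ (hγ hr)) _
  obtain rfl : a = 1 - b := by linarith
  simpa only [γ, chord, AffineMap.lineMap_apply_module, sub_nonneg] using hnonneg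

end MidpointConcave

section Interpolation

lemma affine_le_of_concaveOn {f : ℝ → ℝ} {s : Set ℝ} {x y z α β : ℝ} (hf : ConcaveOn ℝ s f)
    (hx : x ∈ s) (hy : y ∈ s) (hαx : α * x + β ≤ f x) (hαy : α * y + β ≤ f y)
    (hz : z ∈ Icc x y) : α * z + β ≤ f z := by
  have hsub : ConcaveOn ℝ s (f - fun t => α * t) :=
    hf.sub ((LinearMap.mulLeft ℝ α).convexOn hf.1)
  have hmem := (hsub.convex_ge β).ordConnected.out
    ⟨hx, le_sub_iff_add_le'.2 hαx⟩ ⟨hy, le_sub_iff_add_le'.2 hαy⟩ hz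
  exact le_sub_iff_add_le'.1 hmem.2

lemma exists_const_mul_rpow_eq {x y A B : ℝ} (hx : 0 < x) (hxy : x < y) (hA : 0 < A)
    (hAB : A ≤ B) (hBA : B * x ≤ A * y) :
    ∃ C > 0, ∃ k ∈ Icc (0 : ℝ) 1, C * x ^ k = A ∧ C * y ^ k = B := by
  have hratio : 1 < y / x := (one_lt_div hx).2 hxy
  have hBA_pos : 0 < B / A := div_pos (hA.trans_le hAB) hA
  set k := Real.logb (y / x) (B / A)
  have hpow : (y / x) ^ k = B / A := Real.rpow_logb (by positivity) hratio.ne' hBA_pos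
  have hxk : 0 < x ^ k := Real.rpow_pos_of_pos hx k
  refine ⟨A / x ^ k, by positivity, k, ⟨Real.logb_nonneg hratio ((one_le_div hA).2 hAB), ?_⟩,
    by field_simp, ?_⟩
  · rwa [Real.logb_le_iff_le_rpow hratio hBA_pos, Real.rpow_one, div_le_div_iff₀ hA hx, mul_comm y]
  · rw [Real.div_rpow (hx.trans hxy).le hx.le] at hpow
    rw [div_mul_eq_mul_div, mul_div_assoc, hpow, mul_div_cancel₀ _ hA.ne']

end Interpolation

namespace DoublyConcaveOn

variable {f : ℝ → ℝ} {Ω : Set ℝ} {x y z : ℝ}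

lemma concaveOn_log_comp_exp (hf : DoublyConcaveOn f Ω) :
    ConcaveOn ℝ (Real.exp ⁻¹' {t ∈ Ω | 0 < f t}) (fun u => Real.log (f (Real.exp u))) := by
  refine concaveOn_of_continuousOn_of_midpoint_le ?_ ?_ ?_
  · exact ((hf.concaveOn.convex_gt 0).ordConnected.preimage_mono Real.exp_monotone).convex
  · exact (hf.continuousOn.comp Real.continuous_exp.continuousOn fun u hu => hu.1).log
      fun u hu => hu.2.ne'
  · rintro u ⟨hu, hfu⟩ v ⟨hv, hfv⟩
    have hexp : √(Real.exp u * Real.exp v) = Real.exp (midpoint ℝ u v) := by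
      rw [← Real.exp_add, ← Real.exp_half, midpoint_eq_smul_add, smul_eq_mul, invOf_eq_inv,
        div_eq_inv_mul]
    have hgeom := hf.geomConcave _ hu _ hv
    rw [hexp] at hgeom
    calc midpoint ℝ (Real.log (f (Real.exp u))) (Real.log (f (Real.exp v)))
        = Real.log √(f (Real.exp u) * f (Real.exp v)) := by
          rw [Real.log_sqrt (by positivity), Real.log_mul hfu.ne' hfv.ne', midpoint_eq_smul_add,
            smul_eq_mul, invOf_eq_inv, div_eq_inv_mul]
      _ ≤ Real.log (f (Real.exp (midpoint ℝ u v))) := Real.log_le_log (by positivity) hgeom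

lemma const_mul_rpow_le {C k : ℝ} (hf : DoublyConcaveOn f Ω) (hx : x ∈ Ω) (hy : y ∈ Ω)
    (hx0 : 0 < x) (hC : 0 < C) (hfx : C * x ^ k ≤ f x) (hfy : C * y ^ k ≤ f y)
    (hz : z ∈ Icc x y) : C * z ^ k ≤ f z := by
  have hz0 : 0 < z := hx0.trans_le hz.1
  have hy0 : 0 < y := hz0.trans_le hz.2
  have hlog : ∀ t, 0 < t → Real.log (C * t ^ k) = k * Real.log t + Real.log C := fun t ht => by
    rw [Real.log_mul hC.ne' (Real.rpow_pos_of_pos ht k).ne', Real.log_rpow ht, add_comm]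
  have hendpoint : ∀ t ∈ Ω, 0 < t → C * t ^ k ≤ f t →
      Real.log t ∈ Real.exp ⁻¹' {t ∈ Ω | 0 < f t} ∧
        k * Real.log t + Real.log C ≤ Real.log (f (Real.exp (Real.log t))) := by
    intro t ht ht0 hft
    have hpos : 0 < C * t ^ k := by positivity
    rw [mem_preimage, Real.exp_log ht0, ← hlog t ht0]
    exact ⟨⟨ht, hpos.trans_le hft⟩, Real.log_le_log hpos hft⟩
  obtain ⟨hx_mem, hx_le⟩ := hendpoint x hx hx0 hfx
  obtain ⟨hy_mem, hy_le⟩ := hendpoint y hy hy0 hfy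
  have hlogz : Real.log z ∈ Icc (Real.log x) (Real.log y) :=
    ⟨Real.log_le_log hx0 hz.1, Real.log_le_log hz0 hz.2⟩
  have hz_le := affine_le_of_concaveOn hf.concaveOn_log_comp_exp hx_mem hy_mem hx_le hy_le hlogz
  have hfz : 0 < f z := by
    simpa only [Real.exp_log hz0] using
      (hf.concaveOn_log_comp_exp.1.ordConnected.out hx_mem hy_mem hlogz).2
  rwa [Real.exp_log hz0, ← hlog z hz0, Real.log_le_log_iff (by positivity) hfz] at hz_le

lemma apply_le_apply_zero (hf : DoublyConcaveOn f Ω) (h0 : 0 ∈ Ω) (hf0 : 0 < f 0) (hx : x ∈ Ω) :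
    f x ≤ f 0 := by
  have hgeom := hf.geomConcave 0 h0 x hx
  rw [zero_mul, Real.sqrt_zero, Real.sqrt_le_left hf0.le, sq] at hgeom
  exact le_of_mul_le_mul_left hgeom hf0

lemma powerMean_apply_le_of_ratio_le {p a b : ℝ} (hf : DoublyConcaveOn f Ω) (hp : 0 < p)
    (ha : 0 ≤ a) (hb : 0 ≤ b) (hab : a + b = 1) (hx : x ∈ Ω) (hy : y ∈ Ω) (hfx : 0 < f x)
    (hfxy : f x < f y) (hratio : f y * x ≤ f x * y) :
    powerMean p a b (f x) (f y) ≤ f (powerMean p a b x y) := by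
  have hx0 : 0 < x := by
    refine (hf.subset_Ici hx : (0 : ℝ) ≤ x).lt_of_ne ?_
    rintro rfl
    exact (hf.apply_le_apply_zero hx hfx hy).not_gt hfxy
  have hxy : x < y :=
    lt_of_mul_lt_mul_left ((mul_lt_mul_of_pos_right hfxy hx0).trans_le hratio) hfx.le
  obtain ⟨C, hC, k, ⟨hk0, hk1⟩, hCx, hCy⟩ :=
    exists_const_mul_rpow_eq hx0 hxy hfx hfxy.le hratio
  calc powerMean p a b (f x) (f y) = powerMean p a b (C * x ^ k) (C * y ^ k) := by rw [hCx, hCy]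
    _ ≤ C * powerMean p a b x y ^ k :=
      powerMean_const_mul_rpow_le hp ha hb hab hx0.le (hx0.trans hxy).le hC.le hk0 hk1
    _ ≤ f (powerMean p a b x y) :=
      hf.const_mul_rpow_le hx hy hx0 hC hCx.le hCy.le
        (powerMean_mem_Icc hp ha hb hab hx0.le hxy.le)

theorem powerMean_apply_le_of_lt {p a b : ℝ} (hf : DoublyConcaveOn f Ω) (hp0 : 0 < p)
    (hp1 : p ≤ 1) (ha : 0 ≤ a) (hb : 0 ≤ b) (hab : a + b = 1) (hx : x ∈ Ω) (hy : y ∈ Ω)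
    (hxy : x < y) : powerMean p a b (f x) (f y) ≤ f (powerMean p a b x y) := by
  have hx0 : 0 ≤ x := hf.subset_Ici hx
  have hy0 : 0 ≤ y := hf.subset_Ici hy
  obtain ⟨α, β, hαx, hαy⟩ : ∃ α β, α * x + β = f x ∧ α * y + β = f y := by
    have : y - x ≠ 0 := sub_ne_zero.2 hxy.ne'
    exact ⟨(f y - f x) / (y - x), f x - (f y - f x) / (y - x) * x, by ring, by field_simp; ring⟩
  have hαx_nonneg := hαx ▸ hf.nonneg x hx
  have hαy_nonneg := hαy ▸ hf.nonneg y hy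
  have hchord := affine_le_of_concaveOn hf.concaveOn hx hy hαx.le hαy.le
    (powerMean_mem_Icc hp0 ha hb hab hx0 hxy.le)
  rcases le_or_gt α 0 with hα | hα
  · rw [← hαx, ← hαy]
    exact (powerMean_affine_le_of_slope_nonpos hp0 hp1 ha hb hab hx0 hy0 hα
      hαx_nonneg hαy_nonneg).trans hchord
  rcases le_or_gt β 0 with hβ | hβ
  · rw [← hαx, ← hαy]
    exact (powerMean_affine_le_of_intercept_nonpos hp0 hp1 ha hb hab hx0 hy0 hα.le hβ
      hαx_nonneg hαy_nonneg).trans hchord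
  refine hf.powerMean_apply_le_of_ratio_le hp0 ha hb hab hx hy ?_ ?_ ?_ <;> rw [← hαx]
  · positivity
  · rw [← hαy]
    gcongr
  · rw [← hαy]
    linarith [mul_le_mul_of_nonneg_left hxy.le hβ.le]

end DoublyConcaveOn

lemma convex_image_rpow {Ω : Set ℝ} {p : ℝ} (hΩ : Convex ℝ Ω) (hp : 0 ≤ p) :
    Convex ℝ ((fun t : ℝ => t ^ p) '' Ω) := by
  rw [Real.convex_iff_isPreconnected] at hΩ ⊢
  exact hΩ.image _ (Real.continuous_rpow_const hp).continuousOn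

theorem stmt_0 (f : ℝ → ℝ) (Ω : Set ℝ) (hf : DoublyConcaveOn f Ω)
    (p : ℝ) (hp0 : 0 < p) (hp1 : p ≤ 1) :
    ConcaveOn ℝ ((fun t : ℝ => t ^ p) '' Ω) (fun t : ℝ => f (t ^ (1 / p)) ^ p) := by
  refine LinearOrder.concaveOn_of_lt (convex_image_rpow hf.concaveOn.1 hp0.le) ?_
  rintro _ ⟨x, hx, rfl⟩ _ ⟨y, hy, rfl⟩ hxy a b ha hb hab
  have hx0 : 0 ≤ x := hf.subset_Ici hx
  have hy0 : 0 ≤ y := hf.subset_Ici hy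
  have hfx := hf.nonneg x hx
  have hfy := hf.nonneg y hy
  have hlt : x < y := (Real.rpow_lt_rpow_iff hx0 hy0 hp0).1 hxy
  have hz : powerMean p a b x y ∈ Ω := hf.concaveOn.1.ordConnected.out hx hy
    (powerMean_mem_Icc hp0 ha.le hb.le hab hx0 hlt.le)
  have hmean := hf.powerMean_apply_le_of_lt hp0 hp1 ha.le hb.le hab hx hy hlt
  rw [powerMean, one_div, Real.rpow_inv_le_iff_of_pos (by positivity) (hf.nonneg _ hz) hp0] at hmean
  simpa only [one_div, Real.rpow_rpow_inv hx0 hp0.ne', Real.rpow_rpow_inv hy0 hp0.ne',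
    smul_eq_mul, powerMean] using hmean
end

section
/- Let 𝔼 : M_n(ℂ) → M_m(ℂ) be a unital positive linear map, let f be a doubly concave function on an interval Ω ⊆ [0,∞), let Z be an n×n Hermitian matrix with all eigenvalues in Ω, and let p ∈ (0,1]. Then f(𝔼_p(Z)) ≺^{w(log)} 𝔼_p(f(Z)), i.e. for every k = 1,…,m the product of the k smallest eigenvalues of f(𝔼_p(Z)) is at least the product of the k smallest eigenvalues of 𝔼_p(f(Z)). -/
open scoped ComplexOrder

/-!
Normalise `f` at an interior point `s` by `F r = f (s * r) / f s`. Concavity gives a supporting line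
`F r ≤ 1 + γ * (r - 1)`. Geometric concavity gives `F r ≤ F √r ^ 2`; iterated, it turns the
supporting line into the supporting power `F r ≤ r ^ γ` when `0 ≤ γ`. One of the two bounds (which
one depends on `γ`) yields `F r ^ p ≤ 1 + γ * (r ^ p - 1)`, so `g u = f (u ^ (1 / p)) ^ p` is
concave.

With `Y = Z ^ p` the claim becomes the comparison of `E (g Y)` with `g (E Y)` for a nonnegative
concave `g`. In an eigenbasis of `E Y`, Jensen's inequality bounds the diagonal entries of `E (g Y)`
by the eigenvalues of `g (E Y)`. The diagonal of a positive semidefinite matrix in an orthonormal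
basis is the image of its eigenvalues under a doubly stochastic matrix, so by Birkhoff's theorem and
the weighted AM-GM inequality a product of `k` diagonal entries is at least the product of the `k`
smallest eigenvalues.
-/

section Scalar

variable {f : ℝ → ℝ} {Ω : Set ℝ}

theorem exists_forall_le_add_mul_sub (hf : ConcaveOn ℝ Ω f) {s : ℝ} (hs : s ∈ interior Ω) :
    ∃ β : ℝ, ∀ z ∈ Ω, f z ≤ f s + β * (z - s) := by
  have hsΩ : s ∈ Ω := interior_subset hs
  have hg : ConvexOn ℝ Ω (-f) := hf.neg
  refine ⟨-derivWithin (-f) (Set.Ioi s) s, fun z hz => ?_⟩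
  rcases lt_trichotomy z s with hzs | rfl | hsz
  · have hslope := (hg.slope_le_leftDeriv_of_mem_interior hz hs hzs).trans
      (hg.leftDeriv_le_rightDeriv_of_mem_interior hs)
    rw [slope_def_field, div_le_iff₀ (sub_pos.2 hzs)] at hslope
    simp only [Pi.neg_apply] at hslope
    linarith
  · simp
  · have hslope := hg.rightDeriv_le_slope_of_mem_interior hs hz hsz
    rw [slope_def_field, le_div_iff₀ (sub_pos.2 hsz)] at hslope
    simp only [Pi.neg_apply] at hslope
    linarith

theorem concaveOn_map_add_smul_sub_le {V : Type*} [AddCommGroup V] [Module ℝ V] {S : Set V}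
    {φ : V → ℝ} (hφ : ConcaveOn ℝ S φ) {x y : V} {t : ℝ} (ht : 1 ≤ t) (hy : y ∈ S)
    (hxy : y + t • (x - y) ∈ S) : φ (y + t • (x - y)) ≤ φ y + t * (φ x - φ y) := by
  have ht0 : 0 < t := one_pos.trans_le ht
  have hx : t⁻¹ • (y + t • (x - y)) + (1 - t⁻¹) • y = x := by
    rw [smul_add, smul_smul, inv_mul_cancel₀ ht0.ne']
    module
  have h := hφ.2 hxy hy (inv_nonneg.2 ht0.le) (sub_nonneg.2 (inv_le_one_of_one_le₀ ht))
    (add_sub_cancel _ _)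
  rw [hx, smul_eq_mul, smul_eq_mul] at h
  have := mul_le_mul_of_nonneg_left h ht0.le
  field_simp at this
  linarith

theorem rpow_one_add_mul_sub_one_le_of_one_le {r γ p : ℝ} (hγ : 1 ≤ γ) (hr : 0 ≤ 1 + γ * (r - 1))
    (hp0 : 0 ≤ p) (hp1 : p ≤ 1) : (1 + γ * (r - 1)) ^ p ≤ 1 + γ * (r ^ p - 1) := by
  simpa using concaveOn_map_add_smul_sub_le (Real.concaveOn_rpow hp0 hp1) (x := r) hγ
    (Set.mem_Ici.2 zero_le_one) hr

theorem rpow_one_add_mul_sub_one_le_of_nonpos {r γ p : ℝ} (hγ : γ ≤ 0) (hr : 0 ≤ r)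
    (hr' : 0 ≤ 1 + γ * (r - 1)) (hp0 : 0 ≤ p) (hp1 : p ≤ 1) :
    (1 + γ * (r - 1)) ^ p ≤ 1 + γ * (r ^ p - 1) := by
  have hpt : r + (1 - γ) • (1 - r) = 1 + γ * (r - 1) := by rw [smul_eq_mul]; ring
  have h := concaveOn_map_add_smul_sub_le (Real.concaveOn_rpow hp0 hp1) (x := 1) (y := r)
    (t := 1 - γ) (by linarith) hr (hpt ▸ hr')
  rw [hpt, Real.one_rpow] at h
  linarith

theorem rpow_rpow_le_one_add_mul_sub_one {r γ p : ℝ} (hr : 0 ≤ r) (hγ0 : 0 ≤ γ) (hγ1 : γ ≤ 1) :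
    (r ^ γ) ^ p ≤ 1 + γ * (r ^ p - 1) := by
  have h := Real.geom_mean_le_arith_mean2_weighted hγ0 (sub_nonneg.2 hγ1)
    (Real.rpow_nonneg hr p) zero_le_one (add_sub_cancel _ _)
  rw [Real.one_rpow, mul_one, mul_one, ← Real.rpow_mul hr, mul_comm p, Real.rpow_mul hr] at h
  linarith

theorem rpow_le_one_add_mul_rpow_sub_one {r y γ p : ℝ} (hr : 0 ≤ r) (hy : 0 ≤ y)
    (hp0 : 0 ≤ p) (hp1 : p ≤ 1) (haff : y ≤ 1 + γ * (r - 1)) (hpow : 0 ≤ γ → y ≤ r ^ γ) :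
    y ^ p ≤ 1 + γ * (r ^ p - 1) := by
  have haffp : y ^ p ≤ (1 + γ * (r - 1)) ^ p := Real.rpow_le_rpow hy haff hp0
  rcases lt_or_ge γ 0 with hγ | hγ0
  · exact haffp.trans
      (rpow_one_add_mul_sub_one_le_of_nonpos hγ.le hr (hy.trans haff) hp0 hp1)
  rcases le_total γ 1 with hγ1 | hγ1
  · exact (Real.rpow_le_rpow hy (hpow hγ0) hp0).trans (rpow_rpow_le_one_add_mul_sub_one hr hγ0 hγ1)
  · exact haffp.trans (rpow_one_add_mul_sub_one_le_of_one_le hγ1 (hy.trans haff) hp0 hp1)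

theorem rpow_mem_of_ordConnected {I : Set ℝ} (hI : I.OrdConnected) (h1 : 1 ∈ I) {r t : ℝ}
    (hr : r ∈ I) (hr0 : 0 ≤ r) (ht0 : 0 ≤ t) (ht1 : t ≤ 1) : r ^ t ∈ I := by
  rcases le_total r 1 with h | h
  · refine hI.out hr h1 ⟨?_, Real.rpow_le_one hr0 h ht0⟩
    simpa using Real.rpow_le_rpow_of_exponent_ge_of_imp hr0 h ht1 (by simp)
  · refine hI.out h1 hr ⟨Real.one_le_rpow h ht0, ?_⟩
    simpa using Real.rpow_le_rpow_of_exponent_le h ht1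

theorem le_pow_two_pow_of_le_sq_sqrt {F : ℝ → ℝ} {I : Set ℝ} (hI : I.OrdConnected) (h1 : 1 ∈ I)
    (hF0 : ∀ r ∈ I, 0 ≤ F r) (hF : ∀ r ∈ I, F r ≤ F √r ^ 2) {r : ℝ} (hr : r ∈ I) (hr0 : 0 ≤ r)
    (k : ℕ) : F r ≤ F (r ^ ((2 : ℝ) ^ k)⁻¹) ^ 2 ^ k := by
  induction k with
  | zero => simp
  | succ k ih =>
    have hmem : r ^ ((2 : ℝ) ^ k)⁻¹ ∈ I :=
      rpow_mem_of_ordConnected hI h1 hr hr0 (by positivity)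
        (inv_le_one_of_one_le₀ (one_le_pow₀ one_le_two))
    have hsqrt : √(r ^ ((2 : ℝ) ^ k)⁻¹) = r ^ ((2 : ℝ) ^ (k + 1))⁻¹ := by
      rw [Real.sqrt_eq_rpow, ← Real.rpow_mul hr0, pow_succ, mul_inv, one_div]
    calc F r ≤ F (r ^ ((2 : ℝ) ^ k)⁻¹) ^ 2 ^ k := ih
      _ ≤ (F √(r ^ ((2 : ℝ) ^ k)⁻¹) ^ 2) ^ 2 ^ k := pow_le_pow_left₀ (hF0 _ hmem) (hF _ hmem) _
      _ = F (r ^ ((2 : ℝ) ^ (k + 1))⁻¹) ^ 2 ^ (k + 1) := by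
        rw [hsqrt, ← pow_mul, ← pow_succ']

theorem tendsto_exp_mul_rpow_inv_two_pow_sub_one {r : ℝ} (hr : 0 < r) (γ : ℝ) :
    Filter.Tendsto (fun k : ℕ => Real.exp (γ * (2 ^ k * (r ^ ((2 : ℝ) ^ k)⁻¹ - 1)))) Filter.atTop
      (nhds (r ^ γ)) := by
  have hinv : Filter.Tendsto (fun k : ℕ => ((2 : ℝ) ^ k)⁻¹) Filter.atTop
      (nhdsWithin 0 (Set.Ioi 0)) :=
    tendsto_inv_atTop_nhdsGT_zero.comp (tendsto_pow_atTop_atTop_of_one_lt one_lt_two)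
  have hlog := ((tendsto_rpow_sub_one_log hr).comp hinv).const_mul γ
  have hexp := (Real.continuous_exp.tendsto _).comp hlog
  rw [mul_comm γ, ← Real.rpow_def_of_pos hr] at hexp
  simpa only [Function.comp_def, inv_inv] using hexp

theorem le_rpow_of_le_affine {F : ℝ → ℝ} {I : Set ℝ} (hI : I.OrdConnected) (h1 : 1 ∈ I)
    (hF0 : ∀ r ∈ I, 0 ≤ F r) (hF : ∀ r ∈ I, F r ≤ F √r ^ 2) {γ : ℝ} (hγ : 0 ≤ γ)
    (hline : ∀ r ∈ I, F r ≤ 1 + γ * (r - 1)) {r : ℝ} (hr : r ∈ I) (hr0 : 0 ≤ r) :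
    F r ≤ r ^ γ := by
  rcases hr0.eq_or_lt with rfl | hrpos
  · have hsq := hF 0 hr
    have hle := hline 0 hr
    rw [Real.sqrt_zero] at hsq
    rcases (hF0 0 hr).eq_or_lt with hF00 | hF00
    · exact hF00 ▸ Real.rpow_nonneg le_rfl γ
    · obtain rfl : γ = 0 := by nlinarith
      simpa using hle
  -- The affine bound at the points `r ^ (2 ^ k)⁻¹`, which tend to `1`, is sharp enough that its
  -- `2 ^ k`-th power still tends to `r ^ γ`.
  · refine ge_of_tendsto' (tendsto_exp_mul_rpow_inv_two_pow_sub_one hrpos γ) fun k => ?_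
    have hmem : r ^ ((2 : ℝ) ^ k)⁻¹ ∈ I :=
      rpow_mem_of_ordConnected hI h1 hr hr0 (by positivity)
        (inv_le_one_of_one_le₀ (one_le_pow₀ one_le_two))
    set ρ := r ^ ((2 : ℝ) ^ k)⁻¹
    calc F r ≤ F ρ ^ 2 ^ k := le_pow_two_pow_of_le_sq_sqrt hI h1 hF0 hF hr hr0 k
      _ ≤ Real.exp (γ * (ρ - 1)) ^ 2 ^ k := by
        refine pow_le_pow_left₀ (hF0 ρ hmem) ((hline ρ hmem).trans ?_) _
        linarith [Real.add_one_le_exp (γ * (ρ - 1))]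
      _ = Real.exp (γ * (2 ^ k * (ρ - 1))) := by
        rw [← Real.exp_nat_mul]
        push_cast
        ring_nf

theorem eqOn_zero_of_concaveOn_of_nonneg (hf0 : ∀ x ∈ Ω, 0 ≤ f x) (hf : ConcaveOn ℝ Ω f) {s : ℝ}
    (hs : s ∈ interior Ω) (hfs : f s = 0) : Set.EqOn f 0 Ω := by
  obtain ⟨β, hβ⟩ := exists_forall_le_add_mul_sub hf hs
  simp only [hfs, zero_add] at hβ
  have hmin : IsLocalMin (fun z => β * (z - s)) s := by
    filter_upwards [mem_interior_iff_mem_nhds.1 hs] with z hz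
    simpa using (hf0 z hz).trans (hβ z hz)
  have hβ0 : β = 0 :=
    hmin.hasDerivAt_eq_zero (by simpa using ((hasDerivAt_id s).sub_const s).const_mul β)
  exact fun z hz => le_antisymm (by simpa [hβ0] using hβ z hz) (hf0 z hz)

theorem exists_forall_rpow_le_one_add_mul_rpow_sub_one {F : ℝ → ℝ} {I : Set ℝ} (hI : I ⊆ Set.Ici 0)
    (h1 : 1 ∈ interior I) (hF0 : ∀ r ∈ I, 0 ≤ F r) (hF1 : F 1 = 1) (hFc : ConcaveOn ℝ I F)
    (hF : ∀ r ∈ I, F r ≤ F √r ^ 2) {p : ℝ} (hp0 : 0 ≤ p) (hp1 : p ≤ 1) :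
    ∃ γ : ℝ, ∀ r ∈ I, F r ^ p ≤ 1 + γ * (r ^ p - 1) := by
  obtain ⟨γ, hγ⟩ := exists_forall_le_add_mul_sub hFc h1
  rw [hF1] at hγ
  exact ⟨γ, fun r hr => rpow_le_one_add_mul_rpow_sub_one (hI hr) (hF0 r hr) hp0 hp1 (hγ r hr)
    fun hγ0 => le_rpow_of_le_affine hFc.1.ordConnected (interior_subset h1) hF0 hF hγ0 hγ hr
      (hI hr)⟩

theorem exists_forall_rpow_le_add_mul_rpow_sub (hΩ : Ω ⊆ Set.Ici 0) (hf0 : ∀ x ∈ Ω, 0 ≤ f x)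
    (hf : ConcaveOn ℝ Ω f) (hgeo : ∀ x ∈ Ω, ∀ y ∈ Ω, √(f x * f y) ≤ f √(x * y)) {p : ℝ}
    (hp0 : 0 ≤ p) (hp1 : p ≤ 1) {s : ℝ} (hs : s ∈ interior Ω) :
    ∃ β : ℝ, ∀ z ∈ Ω, f z ^ p ≤ f s ^ p + β * (z ^ p - s ^ p) := by
  have hsΩ : s ∈ Ω := interior_subset hs
  have hspos : 0 < s := by simpa using interior_mono hΩ hs
  rcases (hf0 s hsΩ).eq_or_lt with hfs | hfs
  · have hzero := eqOn_zero_of_concaveOn_of_nonneg hf0 hf hs hfs.symm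
    exact ⟨0, fun z hz => by simp [hzero hz, hzero hsΩ]⟩
  set I : Set ℝ := (s * ·) ⁻¹' Ω
  set F : ℝ → ℝ := fun r => (f s)⁻¹ * f (s * r) with hF
  have h1I : 1 ∈ interior I :=
    preimage_interior_subset_interior_preimage (continuous_const_mul s) (by simpa using hs)
  have hFsqrt : ∀ r ∈ I, F r ≤ F √r ^ 2 := fun r hr => by
    have h := (Real.sqrt_le_iff.1 (hgeo s hsΩ _ hr)).2
    rw [← mul_assoc, Real.sqrt_mul (mul_self_nonneg s), Real.sqrt_mul_self hspos.le] at h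
    calc F r = (f s)⁻¹ ^ 2 * (f s * f (s * r)) := by rw [hF]; field_simp
      _ ≤ (f s)⁻¹ ^ 2 * f (s * √r) ^ 2 := mul_le_mul_of_nonneg_left h (sq_nonneg _)
      _ = F √r ^ 2 := (mul_pow _ _ _).symm
  obtain ⟨γ, hγ⟩ := exists_forall_rpow_le_one_add_mul_rpow_sub_one (I := I) (F := F)
    (fun r hr => (mul_nonneg_iff_of_pos_left hspos).1 (hΩ hr)) h1I
    (fun r hr => mul_nonneg (inv_nonneg.2 hfs.le) (hf0 _ hr)) (by simp [hF, hfs.ne'])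
    ((hf.comp_linearMap (LinearMap.mulLeft ℝ s)).smul (inv_nonneg.2 hfs.le)) hFsqrt hp0 hp1
  refine ⟨f s ^ p * γ / s ^ p, fun z hz => ?_⟩
  have hz_eq : s * (z / s) = z := mul_div_cancel₀ z hspos.ne'
  have h := hγ (z / s) (by simpa only [I, Set.mem_preimage, hz_eq] using hz)
  simp only [hF, hz_eq] at h
  rw [inv_mul_eq_div, Real.div_rpow (hf0 z hz) hfs.le, Real.div_rpow (hΩ hz) hspos.le,
    div_le_iff₀ (Real.rpow_pos_of_pos hfs p)] at h
  refine h.trans_eq ?_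
  field_simp [(Real.rpow_pos_of_pos hspos p).ne']

/-- The conjugate `u ↦ f (u ^ (1 / p)) ^ p` of `f` by the power map `x ↦ x ^ p`, through which a
statement on `p`-means of `f` becomes one on ordinary means. -/
noncomputable def rpowConj (p : ℝ) (f : ℝ → ℝ) : ℝ → ℝ :=
  fun u => f (u ^ (1 / p)) ^ p

/-- The image of the part of `Ω` in `[0, ∞)` under `x ↦ x ^ p`, for `p ≠ 0`; this is the domain of
`rpowConj p f` when `f` has domain `Ω`. It is encoded as a preimage under the inverse power map. -/
def rpowDomain (p : ℝ) (Ω : Set ℝ) : Set ℝ :=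
  {u | 0 ≤ u ∧ u ^ (1 / p) ∈ Ω}

theorem convex_rpowDomain (hΩ : Convex ℝ Ω) {p : ℝ} (hp : 0 ≤ p) : Convex ℝ (rpowDomain p Ω) := by
  have hq : 0 ≤ 1 / p := one_div_nonneg.2 hp
  refine Set.OrdConnected.convex ⟨fun a ha b hb u hu => ?_⟩
  have hu0 : 0 ≤ u := ha.1.trans hu.1
  exact ⟨hu0, hΩ.ordConnected.out ha.2 hb.2
    ⟨Real.rpow_le_rpow ha.1 hu.1 hq, Real.rpow_le_rpow hu0 hu.2 hq⟩⟩

theorem rpow_one_div_mem_interior (hΩ : Convex ℝ Ω) {p : ℝ} (hp : 0 < p) {a u b : ℝ}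
    (ha : a ∈ rpowDomain p Ω) (hb : b ∈ rpowDomain p Ω) (hau : a < u) (hub : u < b) :
    u ^ (1 / p) ∈ interior Ω := by
  have hq : 0 < 1 / p := one_div_pos.2 hp
  exact mem_interior_iff_mem_nhds.2 <| Filter.mem_of_superset
    (Icc_mem_nhds (Real.rpow_lt_rpow ha.1 hau hq) (Real.rpow_lt_rpow (ha.1.trans hau.le) hub hq))
    (hΩ.ordConnected.out ha.2 hb.2)

theorem concaveOn_rpowConj (hΩ : Ω ⊆ Set.Ici 0) (hf0 : ∀ x ∈ Ω, 0 ≤ f x)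
    (hf : ConcaveOn ℝ Ω f) (hgeo : ∀ x ∈ Ω, ∀ y ∈ Ω, √(f x * f y) ≤ f √(x * y)) {p : ℝ}
    (hp0 : 0 < p) (hp1 : p ≤ 1) : ConcaveOn ℝ (rpowDomain p Ω) (rpowConj p f) := by
  refine concaveOn_of_slope_anti_adjacent (convex_rpowDomain hf.1 hp0.le)
    fun {a u b} ha hb hau hub => ?_
  obtain ⟨β, hβ⟩ := exists_forall_rpow_le_add_mul_rpow_sub hΩ hf0 hf hgeo hp0.le hp1
    (rpow_one_div_mem_interior hf.1 hp0 ha hb hau hub)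
  have hpow : ∀ v : ℝ, 0 ≤ v → (v ^ (1 / p)) ^ p = v := fun v hv => by
    rw [one_div, Real.rpow_inv_rpow hv hp0.ne']
  have hline : ∀ v ∈ rpowDomain p Ω, rpowConj p f v ≤ rpowConj p f u + β * (v - u) :=
    fun v hv => by
      simpa only [rpowConj, hpow v hv.1, hpow u (ha.1.trans hau.le)] using hβ _ hv.2
  calc (rpowConj p f b - rpowConj p f u) / (b - u) ≤ β := by
        rw [div_le_iff₀ (sub_pos.2 hub)]
        linarith [hline b hb]
    _ ≤ (rpowConj p f u - rpowConj p f a) / (u - a) := by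
        rw [le_div_iff₀ (sub_pos.2 hau)]
        linarith [hline a ha]

end Scalar

section Products

theorem exists_perm_comp_eq_of_map_univ_eq {ι α : Type*} [Fintype ι] {c d : ι → α}
    (h : Finset.univ.val.map c = Finset.univ.val.map d) : ∃ σ : Equiv.Perm ι, d ∘ σ = c := by
  classical
  have hcard : ∀ x, Fintype.card {i // c i = x} = Fintype.card {i // d i = x} := fun x => by
    have hcount := congrArg (Multiset.count x) h
    simp only [Multiset.count_map] at hcount
    simpa only [Fintype.card_subtype, Finset.card_def, Finset.filter_val, eq_comm] using hcount
  exact ⟨Equiv.ofFiberEquiv fun x => Fintype.equivOfCardEq (hcard x),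
    funext fun i => Equiv.ofFiberEquiv_map _ i⟩

theorem prod_le_prod_of_card_eq_of_monotone {α : Type*} [LinearOrder α] {d : α → ℝ}
    (hd : Monotone d) (hd0 : ∀ i, 0 ≤ d i) {K J : Finset α} (hK : ∀ i ∈ K, ∀ j ∉ K, i ≤ j)
    (hKJ : K.card = J.card) : ∏ i ∈ K, d i ≤ ∏ i ∈ J, d i := by
  have e : ↥(K \ J) ≃ ↥(J \ K) := Finset.equivOfCardEq (Finset.card_sdiff_comm hKJ)
  have hdiff : ∏ i ∈ K \ J, d i ≤ ∏ i ∈ J \ K, d i := by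
    rw [← Finset.prod_coe_sort, ← Finset.prod_coe_sort (J \ K), ← e.prod_comp]
    refine Finset.prod_le_prod (fun i _ => hd0 i) fun i _ => hd ?_
    exact hK i (Finset.mem_sdiff.1 i.2).1 (e i) (Finset.mem_sdiff.1 (e i).2).2
  rw [← Finset.prod_inter_mul_prod_sdiff K J, ← Finset.prod_inter_mul_prod_sdiff J K,
    Finset.inter_comm J K]
  exact mul_le_mul_of_nonneg_left hdiff (Finset.prod_nonneg fun i _ => hd0 i)

theorem exists_le_prod_rpow_of_sum_eq_one {κ : Type*} [Fintype κ] {w a : κ → ℝ}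
    (hw0 : ∀ i, 0 ≤ w i) (hw1 : ∑ i, w i = 1) (ha : ∀ i, 0 ≤ a i) :
    ∃ i, a i ≤ ∏ j, a j ^ w j := by
  have hne : (Finset.univ : Finset κ).Nonempty :=
    Finset.nonempty_of_sum_ne_zero (hw1.trans_ne one_ne_zero)
  obtain ⟨i, -, hi⟩ := Finset.exists_min_image Finset.univ a hne
  refine ⟨i, ?_⟩
  calc a i = ∏ j, a i ^ w j := by
        rw [← Real.rpow_sum_of_nonneg (ha i) fun j _ => hw0 j, hw1, Real.rpow_one]
    _ ≤ ∏ j, a j ^ w j := Finset.prod_le_prod (fun j _ => Real.rpow_nonneg (ha i) _) fun j hj =>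
        Real.rpow_le_rpow (ha i) (hi j hj) (hw0 j)

theorem exists_perm_prod_le_prod_mulVec {ι : Type*} [Fintype ι] [DecidableEq ι]
    {S : Matrix ι ι ℝ} (hS : S ∈ doublyStochastic ℝ ι) {b : ι → ℝ} (hb : ∀ i, 0 ≤ b i)
    (J : Finset ι) :
    ∃ σ : Equiv.Perm ι, ∏ j ∈ J, b (σ j) ≤ ∏ j ∈ J, S.mulVec b j := by
  obtain ⟨w, hw0, hw1, rfl⟩ := exists_eq_sum_perm_of_mem_doublyStochastic hS
  have hrow : ∀ j, (∑ σ, w σ • σ.permMatrix ℝ).mulVec b j = ∑ σ, w σ * b (σ j) := fun j => by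
    simp [Matrix.sum_mulVec, Finset.sum_apply, Matrix.smul_mulVec, Matrix.permMatrix_mulVec]
  obtain ⟨σ, hσ⟩ := exists_le_prod_rpow_of_sum_eq_one hw0 hw1
    fun τ : Equiv.Perm ι => Finset.prod_nonneg fun j (_ : j ∈ J) => hb (τ j)
  refine ⟨σ, ?_⟩
  calc ∏ j ∈ J, b (σ j) ≤ ∏ τ, (∏ j ∈ J, b (τ j)) ^ w τ := hσ
    _ = ∏ j ∈ J, ∏ τ, b (τ j) ^ w τ := by
      simp only [← Real.finsetProd_rpow _ _ fun _ _ => hb _]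
      exact Finset.prod_comm
    _ ≤ ∏ j ∈ J, (∑ τ, w τ • τ.permMatrix ℝ).mulVec b j := by
      refine Finset.prod_le_prod
        (fun j _ => Finset.prod_nonneg fun τ _ => Real.rpow_nonneg (hb _) _) fun j _ => ?_
      rw [hrow]
      exact Real.geom_mean_le_arith_mean_weighted _ _ _ (fun τ _ => hw0 τ) hw1 fun τ _ => hb _

end Products

section States

open Matrix

variable {𝕜 ι : Type*} [RCLike 𝕜] [Fintype ι]

/-- The real part of the quadratic form of a matrix at a fixed vector `v`, as a linear functional
of the matrix; for a unit vector this is the vector state `A ↦ ⟨v, A v⟩`. -/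
noncomputable def vectorState (v : EuclideanSpace 𝕜 ι) : Matrix ι ι 𝕜 →ₗ[ℝ] ℝ where
  toFun A := RCLike.re (star v.ofLp ⬝ᵥ A *ᵥ v.ofLp)
  map_add' A B := by rw [add_mulVec, dotProduct_add, map_add]
  map_smul' c A := by rw [smul_mulVec, dotProduct_smul, RCLike.smul_re]; rfl

theorem vectorState_apply (v : EuclideanSpace 𝕜 ι) (A : Matrix ι ι 𝕜) :
    vectorState v A = RCLike.re (star v.ofLp ⬝ᵥ A *ᵥ v.ofLp) := rfl

theorem vectorState_nonneg (v : EuclideanSpace 𝕜 ι) {A : Matrix ι ι 𝕜} (hA : A.PosSemidef) :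
    0 ≤ vectorState v A :=
  hA.re_dotProduct_nonneg v.ofLp

theorem vectorState_vecMulVec_star (v w : EuclideanSpace 𝕜 ι) :
    vectorState v (vecMulVec w.ofLp (star w.ofLp)) = ‖inner 𝕜 w v‖ ^ 2 := by
  rw [vectorState_apply, vecMulVec_mulVec, dotProduct_smul, op_smul_eq_mul,
    star_dotProduct v.ofLp, EuclideanSpace.inner_eq_star_dotProduct, dotProduct_comm v.ofLp,
    RCLike.star_def, RCLike.conj_mul]
  norm_cast

variable [DecidableEq ι]

theorem vectorState_one (v : EuclideanSpace 𝕜 ι) : vectorState v 1 = ‖v‖ ^ 2 := by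
  rw [vectorState_apply, one_mulVec, dotProduct_comm, ← EuclideanSpace.inner_eq_star_dotProduct,
    inner_self_eq_norm_sq]

theorem vectorState_eigenvectorBasis {A : Matrix ι ι 𝕜} (hA : A.IsHermitian) (i : ι) :
    vectorState (hA.eigenvectorBasis i) A = hA.eigenvalues i := by
  have hv := vectorState_one (hA.eigenvectorBasis i)
  rw [vectorState_apply, one_mulVec, hA.eigenvectorBasis.norm_eq_one, one_pow] at hv
  rw [vectorState_apply, hA.mulVec_eigenvectorBasis, dotProduct_smul, RCLike.smul_re, hv, mul_one]

/-- The orthogonal projection onto the line spanned by the `i`-th vector of the chosen eigenbasis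
of a Hermitian matrix. -/
noncomputable def eigenvectorProj {A : Matrix ι ι 𝕜} (hA : A.IsHermitian) (i : ι) :
    Matrix ι ι 𝕜 :=
  vecMulVec (hA.eigenvectorBasis i).ofLp (star (hA.eigenvectorBasis i).ofLp)

theorem posSemidef_eigenvectorProj {A : Matrix ι ι 𝕜} (hA : A.IsHermitian) (i : ι) :
    (eigenvectorProj hA i).PosSemidef :=
  posSemidef_vecMulVec_self_star _

theorem cfc_eq_sum_smul_eigenvectorProj {A : Matrix ι ι 𝕜} (hA : A.IsHermitian) (g : ℝ → ℝ) :
    cfc g A = ∑ i, g (hA.eigenvalues i) • eigenvectorProj hA i := by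
  ext a b
  rw [hA.cfc_eq, IsHermitian.cfc, Unitary.conjStarAlgAut_apply, mul_apply, Matrix.sum_apply]
  refine Finset.sum_congr rfl fun i _ => ?_
  rw [mul_diagonal, Matrix.smul_apply, eigenvectorProj, vecMulVec_apply, star_apply,
    hA.eigenvectorUnitary_apply, hA.eigenvectorUnitary_apply, RCLike.real_smul_eq_coe_mul,
    mul_right_comm, mul_comm]
  rfl

theorem map_cfc_eq_sum {V : Type*} [AddCommGroup V] [Module ℝ V] {A : Matrix ι ι 𝕜}
    (hA : A.IsHermitian) (L : Matrix ι ι 𝕜 →ₗ[ℝ] V) (g : ℝ → ℝ) :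
    L (cfc g A) = ∑ i, g (hA.eigenvalues i) • L (eigenvectorProj hA i) := by
  simp only [cfc_eq_sum_smul_eigenvectorProj hA, map_sum, map_smul]

theorem map_eq_sum {V : Type*} [AddCommGroup V] [Module ℝ V] {A : Matrix ι ι 𝕜}
    (hA : A.IsHermitian) (L : Matrix ι ι 𝕜 →ₗ[ℝ] V) :
    L A = ∑ i, hA.eigenvalues i • L (eigenvectorProj hA i) := by
  simpa only [cfc_id' ℝ A hA.isSelfAdjoint] using map_cfc_eq_sum hA L fun x => x

theorem sum_map_eigenvectorProj {V : Type*} [AddCommGroup V] [Module ℝ V] {A : Matrix ι ι 𝕜}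
    (hA : A.IsHermitian) (L : Matrix ι ι 𝕜 →ₗ[ℝ] V) :
    ∑ i, L (eigenvectorProj hA i) = L 1 := by
  simpa only [cfc_const_one ℝ A hA.isSelfAdjoint, one_smul] using
    (map_cfc_eq_sum hA L fun _ => 1).symm

section Jensen

variable {φ : Matrix ι ι 𝕜 →ₗ[ℝ] ℝ} {A : Matrix ι ι 𝕜} {D : Set ℝ}

theorem state_mem_of_spectrum_subset (hφ : ∀ B : Matrix ι ι 𝕜, B.PosSemidef → 0 ≤ φ B)
    (hφ1 : φ 1 = 1) (hA : A.IsHermitian) (hD : Convex ℝ D) (hAD : spectrum ℝ A ⊆ D) :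
    φ A ∈ D := by
  simp only [map_eq_sum hA φ, smul_eq_mul, mul_comm (hA.eigenvalues _)]
  exact hD.sum_mem (fun i _ => hφ _ (posSemidef_eigenvectorProj hA i))
    ((sum_map_eigenvectorProj hA φ).trans hφ1) fun i _ => hAD (hA.eigenvalues_mem_spectrum_real i)

theorem state_cfc_le_of_concaveOn (hφ : ∀ B : Matrix ι ι 𝕜, B.PosSemidef → 0 ≤ φ B)
    (hφ1 : φ 1 = 1) (hA : A.IsHermitian) {g : ℝ → ℝ} (hg : ConcaveOn ℝ D g)
    (hAD : spectrum ℝ A ⊆ D) : φ (cfc g A) ≤ g (φ A) := by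
  simp only [map_cfc_eq_sum hA φ, map_eq_sum hA φ, smul_eq_mul, mul_comm _ (φ _)]
  exact hg.le_map_sum (fun i _ => hφ _ (posSemidef_eigenvectorProj hA i))
    ((sum_map_eigenvectorProj hA φ).trans hφ1) fun i _ => hAD (hA.eigenvalues_mem_spectrum_real i)

end Jensen

end States

section Spectrum

open Matrix

variable {𝕜 𝕜' ι κ : Type*} [RCLike 𝕜] [RCLike 𝕜']

theorem isHermitian_map_of_posSemidef [Finite ι] {E : Matrix ι ι 𝕜 →ₗ[ℝ] Matrix κ κ 𝕜'}
    (hE : ∀ B : Matrix ι ι 𝕜, B.PosSemidef → (E B).PosSemidef) {A : Matrix ι ι 𝕜}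
    (hA : A.IsHermitian) : (E A).IsHermitian := by
  classical
  cases nonempty_fintype ι
  rw [map_eq_sum hA E]
  exact isSelfAdjoint_sum _ fun i _ =>
    (IsSelfAdjoint.all _).smul (hE _ (posSemidef_eigenvectorProj hA i)).1.isSelfAdjoint

variable [Fintype ι] [Fintype κ] [DecidableEq ι] [DecidableEq κ]

theorem cfc_cfc_of_isHermitian {A : Matrix ι ι 𝕜} (hA : A.IsHermitian) (g h : ℝ → ℝ) :
    cfc g (cfc h A) = cfc (fun x => g (h x)) A :=
  (cfc_comp' g h A ((A.finite_real_spectrum.image h).continuousOn g)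
    (A.finite_real_spectrum.continuousOn h) hA).symm

theorem posSemidef_cfc {A : Matrix ι ι 𝕜} {g : ℝ → ℝ} (hg : ∀ x ∈ spectrum ℝ A, 0 ≤ g x) :
    (cfc g A).PosSemidef := by
  open scoped MatrixOrder in exact nonneg_iff_posSemidef.1 (cfc_nonneg hg)

section PowerConjugation

variable {A : Matrix ι ι 𝕜} {f : ℝ → ℝ} {Ω : Set ℝ} {p : ℝ}

theorem spectrum_cfc_rpow_subset (hΩ0 : Ω ⊆ Set.Ici 0) (hA : A.IsHermitian)
    (hAΩ : spectrum ℝ A ⊆ Ω) (hp : p ≠ 0) :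
    spectrum ℝ (cfc (fun x : ℝ => x ^ p) A) ⊆ rpowDomain p Ω := by
  refine (cfc_map_spectrum (R := ℝ) _ A hA (A.finite_real_spectrum.continuousOn _)).trans_subset ?_
  rintro _ ⟨x, hx, rfl⟩
  have hx0 : 0 ≤ x := hΩ0 (hAΩ hx)
  refine ⟨Real.rpow_nonneg hx0 p, ?_⟩
  rw [one_div, Real.rpow_rpow_inv hx0 hp]
  exact hAΩ hx

theorem cfc_rpow_cfc_eq_cfc_rpowConj (hA : A.IsHermitian) (hA0 : spectrum ℝ A ⊆ Set.Ici 0)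
    (hp : p ≠ 0) (f : ℝ → ℝ) :
    cfc (fun x : ℝ => x ^ p) (cfc f A) = cfc (rpowConj p f) (cfc (fun x : ℝ => x ^ p) A) := by
  rw [cfc_cfc_of_isHermitian hA, cfc_cfc_of_isHermitian hA]
  refine cfc_congr fun x hx => ?_
  simp only [rpowConj, one_div, Real.rpow_rpow_inv (hA0 hx) hp]

theorem cfc_cfc_rpow_eq_cfc_rpowConj (hf0 : ∀ x ∈ Ω, 0 ≤ f x) (hA : A.IsHermitian)
    (hAΩ : spectrum ℝ A ⊆ rpowDomain p Ω) (hp : p ≠ 0) :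
    cfc f (cfc (fun x : ℝ => x ^ (1 / p)) A) =
      cfc (fun x : ℝ => x ^ (1 / p)) (cfc (rpowConj p f) A) := by
  rw [cfc_cfc_of_isHermitian hA, cfc_cfc_of_isHermitian hA]
  refine cfc_congr fun x hx => ?_
  simp only [rpowConj, one_div p, Real.rpow_rpow_inv (hf0 _ (one_div p ▸ (hAΩ hx).2)) hp]

end PowerConjugation

variable {E : Matrix ι ι 𝕜 →ₗ[ℝ] Matrix κ κ 𝕜'} {A : Matrix ι ι 𝕜} {D : Set ℝ}
  {v : EuclideanSpace 𝕜' κ}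

theorem vectorState_map_mem (hE : ∀ B : Matrix ι ι 𝕜, B.PosSemidef → (E B).PosSemidef)
    (hE1 : E 1 = 1) (hv : ‖v‖ = 1) (hA : A.IsHermitian) (hD : Convex ℝ D)
    (hAD : spectrum ℝ A ⊆ D) : vectorState v (E A) ∈ D :=
  state_mem_of_spectrum_subset (φ := vectorState v ∘ₗ E)
    (fun B hB => vectorState_nonneg v (hE B hB)) (by simp [hE1, vectorState_one, hv]) hA hD hAD

theorem vectorState_map_cfc_le (hE : ∀ B : Matrix ι ι 𝕜, B.PosSemidef → (E B).PosSemidef)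
    (hE1 : E 1 = 1) (hv : ‖v‖ = 1) (hA : A.IsHermitian) {g : ℝ → ℝ} (hg : ConcaveOn ℝ D g)
    (hAD : spectrum ℝ A ⊆ D) : vectorState v (E (cfc g A)) ≤ g (vectorState v (E A)) :=
  state_cfc_le_of_concaveOn (φ := vectorState v ∘ₗ E)
    (fun B hB => vectorState_nonneg v (hE B hB)) (by simp [hE1, vectorState_one, hv]) hA hg hAD

theorem spectrum_map_subset_of_posSemidef
    (hE : ∀ B : Matrix ι ι 𝕜, B.PosSemidef → (E B).PosSemidef) (hE1 : E 1 = 1)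
    (hA : A.IsHermitian) (hD : Convex ℝ D) (hAD : spectrum ℝ A ⊆ D) :
    spectrum ℝ (E A) ⊆ D := by
  have hEA := isHermitian_map_of_posSemidef hE hA
  rw [hEA.spectrum_real_eq_range_eigenvalues]
  rintro _ ⟨j, rfl⟩
  rw [← vectorState_eigenvectorBasis hEA j]
  exact vectorState_map_mem hE hE1 (hEA.eigenvectorBasis.norm_eq_one j) hA hD hAD

end Spectrum

section SmallestEigenvalues

open Matrix

variable {m : ℕ} {A : Matrix (Fin m) (Fin m) ℂ}

theorem exists_perm_eigUp_cfc_eq (hA : A.IsHermitian) (g : ℝ → ℝ) :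
    ∃ σ : Equiv.Perm (Fin m), ∀ i,
      eigUp (cfc_predicate g A : (cfc g A).IsHermitian) i = g (hA.eigenvalues (σ i)) := by
  have hC : (cfc g A).IsHermitian := cfc_predicate g A
  have hroots : Finset.univ.val.map hC.eigenvalues =
      Finset.univ.val.map (fun i => g (hA.eigenvalues i)) := by
    have h := hC.roots_charpoly_eq_eigenvalues
    rw [hA.charpoly_cfc_eq, Polynomial.roots_prod _ _
      (Finset.prod_ne_zero_iff.2 fun i _ => Polynomial.X_sub_C_ne_zero _)] at h
    simp only [Polynomial.roots_X_sub_C, Multiset.bind_singleton] at h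
    refine Multiset.map_injective (f := ((↑) : ℝ → ℂ)) Complex.ofReal_injective ?_
    rw [Multiset.map_map, Multiset.map_map]
    exact h.symm
  obtain ⟨σ, hσ⟩ := exists_perm_comp_eq_of_map_univ_eq hroots
  exact ⟨(Tuple.sort hC.eigenvalues).trans σ, fun i => (congrFun hσ _).symm⟩

theorem monotone_eigUp (hA : A.IsHermitian) : Monotone (eigUp hA) :=
  Tuple.monotone_sort hA.eigenvalues

theorem eigUp_mem_spectrum (hA : A.IsHermitian) (i : Fin m) : eigUp hA i ∈ spectrum ℝ A :=
  hA.eigenvalues_mem_spectrum_real _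

theorem eigUp_cfc_eq_of_monotoneOn (hA : A.IsHermitian) {g : ℝ → ℝ}
    (hg : MonotoneOn g (spectrum ℝ A)) (i : Fin m) :
    eigUp (cfc_predicate g A : (cfc g A).IsHermitian) i = g (eigUp hA i) := by
  obtain ⟨σ, hσ⟩ := exists_perm_eigUp_cfc_eq hA g
  have hσmono : Monotone ((fun i => g (hA.eigenvalues i)) ∘ σ) := fun i j hij => by
    simpa only [Function.comp_apply, ← hσ] using monotone_eigUp _ hij
  have hmono : Monotone ((fun i => g (hA.eigenvalues i)) ∘ Tuple.sort hA.eigenvalues) :=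
    fun i j hij => hg (eigUp_mem_spectrum hA i) (eigUp_mem_spectrum hA j) (monotone_eigUp hA hij)
  exact (hσ i).trans (congrFun (Tuple.unique_monotone hσmono hmono) i)

theorem prodSmall_eq_prod_eigUp (hA : A.IsHermitian) (k : ℕ) :
    prodSmall A k = ∏ i ∈ Finset.univ.filter fun i : Fin m => (i : ℕ) < k, eigUp hA i :=
  dif_pos hA

theorem prodSmall_nonneg (hA : A.PosSemidef) (k : ℕ) : 0 ≤ prodSmall A k := by
  rw [prodSmall_eq_prod_eigUp hA.1]
  exact Finset.prod_nonneg fun i _ => hA.eigenvalues_nonneg _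

theorem prodSmall_cfc_rpow (hA : A.PosSemidef) {q : ℝ} (hq : 0 ≤ q) (k : ℕ) :
    prodSmall (cfc (fun x : ℝ => x ^ q) A) k = prodSmall A k ^ q := by
  have hmono : MonotoneOn (fun x : ℝ => x ^ q) (spectrum ℝ A) := by
    rw [hA.1.spectrum_real_eq_range_eigenvalues]
    rintro _ ⟨i, rfl⟩ _ _ hij
    exact Real.rpow_le_rpow (hA.eigenvalues_nonneg i) hij hq
  have hprod := prodSmall_eq_prod_eigUp (cfc_predicate (fun x : ℝ => x ^ q) A) k
  simp only [eigUp_cfc_eq_of_monotoneOn hA.1 hmono] at hprod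
  rw [hprod, prodSmall_eq_prod_eigUp hA.1]
  exact Real.finsetProd_rpow _ _ (fun i _ => hA.eigenvalues_nonneg _) q

theorem exists_prodSmall_cfc_eq_prod (hA : A.IsHermitian) (g : ℝ → ℝ) (k : ℕ) :
    ∃ J : Finset (Fin m), J.card = min m k ∧
      prodSmall (cfc g A) k = ∏ j ∈ J, g (hA.eigenvalues j) := by
  obtain ⟨σ, hσ⟩ := exists_perm_eigUp_cfc_eq hA g
  refine ⟨({i : Fin m | (i : ℕ) < k} : Finset _).map σ.toEmbedding, ?_, ?_⟩
  · rw [Finset.card_map, Fin.card_filter_val_lt]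
  · rw [prodSmall_eq_prod_eigUp (cfc_predicate g A), Finset.prod_map]
    exact Finset.prod_congr rfl fun i _ => hσ i

theorem prodSmall_le_prod_eigenvalues (hA : A.PosSemidef) {k : ℕ} {J : Finset (Fin m)}
    (hJ : J.card = min m k) : prodSmall A k ≤ ∏ j ∈ J, hA.1.eigenvalues j := by
  have hle := prod_le_prod_of_card_eq_of_monotone (monotone_eigUp hA.1)
    (fun i => hA.eigenvalues_nonneg _) (K := {i : Fin m | (i : ℕ) < k})
    (J := J.map (Tuple.sort hA.1.eigenvalues).symm.toEmbedding)
    (fun i hi j hj => by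
      simp only [Finset.mem_filter, Finset.mem_univ, true_and, not_lt] at hi hj
      exact Fin.le_def.2 (hi.le.trans hj))
    (by rw [Finset.card_map, Fin.card_filter_val_lt, hJ])
  rw [prodSmall_eq_prod_eigUp hA.1]
  simpa [Finset.prod_map, eigUp] using hle

theorem prodSmall_le_prod_vectorState (hA : A.PosSemidef)
    (u : OrthonormalBasis (Fin m) ℂ (EuclideanSpace ℂ (Fin m))) {k : ℕ} {J : Finset (Fin m)}
    (hJ : J.card = min m k) : prodSmall A k ≤ ∏ j ∈ J, vectorState (u j) A := by
  set S : Matrix (Fin m) (Fin m) ℝ :=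
    .of fun j i => ‖inner ℂ (hA.1.eigenvectorBasis i) (u j)‖ ^ 2
  have hS : S ∈ doublyStochastic ℝ (Fin m) := mem_doublyStochastic_iff_sum.2
    ⟨fun _ _ => sq_nonneg _, fun j => by simp [S, OrthonormalBasis.sum_sq_norm_inner_right],
      fun i => by simp [S, OrthonormalBasis.sum_sq_norm_inner_left]⟩
  have hSdiag : ∀ j, vectorState (u j) A = (S *ᵥ hA.1.eigenvalues) j := fun j => by
    rw [map_eq_sum hA.1]
    refine Finset.sum_congr rfl fun i _ => ?_
    rw [eigenvectorProj, vectorState_vecMulVec_star, smul_eq_mul, mul_comm]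
    rfl
  obtain ⟨σ, hσ⟩ := exists_perm_prod_le_prod_mulVec hS hA.eigenvalues_nonneg J
  calc prodSmall A k ≤ ∏ j ∈ J.map σ.toEmbedding, hA.1.eigenvalues j :=
        prodSmall_le_prod_eigenvalues hA (by rw [Finset.card_map, hJ])
    _ = ∏ j ∈ J, hA.1.eigenvalues (σ j) := by rw [Finset.prod_map]; rfl
    _ ≤ ∏ j ∈ J, (S *ᵥ hA.1.eigenvalues) j := hσ
    _ = ∏ j ∈ J, vectorState (u j) A := by simp only [hSdiag]

section PositiveMap

variable {𝕜 ι : Type*} [RCLike 𝕜] [Fintype ι] [DecidableEq ι]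
  {E : Matrix ι ι 𝕜 →ₗ[ℝ] Matrix (Fin m) (Fin m) ℂ}

theorem prodSmall_map_cfc_le_of_concaveOn
    (hE : ∀ B : Matrix ι ι 𝕜, B.PosSemidef → (E B).PosSemidef) (hE1 : E 1 = 1)
    {Y : Matrix ι ι 𝕜} (hY : Y.IsHermitian) {D : Set ℝ} (hYD : spectrum ℝ Y ⊆ D) {g : ℝ → ℝ}
    (hg0 : ∀ x ∈ D, 0 ≤ g x) (hg : ConcaveOn ℝ D g) (k : ℕ) :
    prodSmall (E (cfc g Y)) k ≤ prodSmall (cfc g (E Y)) k := by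
  have hEY : (E Y).IsHermitian := isHermitian_map_of_posSemidef hE hY
  have hEg : (E (cfc g Y)).PosSemidef := hE _ (posSemidef_cfc fun x hx => hg0 x (hYD hx))
  obtain ⟨J, hJ, hprod⟩ := exists_prodSmall_cfc_eq_prod hEY g k
  have hjensen : ∀ j, vectorState (hEY.eigenvectorBasis j) (E (cfc g Y)) ≤
      g (hEY.eigenvalues j) := fun j => by
    rw [← vectorState_eigenvectorBasis hEY j]
    exact vectorState_map_cfc_le hE hE1 (hEY.eigenvectorBasis.norm_eq_one j) hY hg hYD
  calc prodSmall (E (cfc g Y)) k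
      ≤ ∏ j ∈ J, vectorState (hEY.eigenvectorBasis j) (E (cfc g Y)) :=
        prodSmall_le_prod_vectorState hEg _ hJ
    _ ≤ ∏ j ∈ J, g (hEY.eigenvalues j) :=
        Finset.prod_le_prod (fun j _ => vectorState_nonneg _ hEg) fun j _ => hjensen j
    _ = prodSmall (cfc g (E Y)) k := hprod.symm

theorem stmt_1_general (hE : ∀ B : Matrix ι ι 𝕜, B.PosSemidef → (E B).PosSemidef)
    (hE1 : E 1 = 1) {f : ℝ → ℝ} {Ω : Set ℝ} (hΩ0 : Ω ⊆ Set.Ici 0) (hf0 : ∀ x ∈ Ω, 0 ≤ f x)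
    (hf : ConcaveOn ℝ Ω f) (hgeo : ∀ x ∈ Ω, ∀ y ∈ Ω, √(f x * f y) ≤ f √(x * y))
    {Z : Matrix ι ι 𝕜} (hZ : Z.IsHermitian) (hZΩ : spectrum ℝ Z ⊆ Ω) {p : ℝ} (hp0 : 0 < p)
    (hp1 : p ≤ 1) (k : ℕ) :
    prodSmall (cfc (fun x : ℝ => x ^ (1 / p)) (E (cfc (fun x : ℝ => x ^ p) (cfc f Z)))) k ≤
      prodSmall (cfc f (cfc (fun x : ℝ => x ^ (1 / p)) (E (cfc (fun x : ℝ => x ^ p) Z)))) k := by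
  have hq : 0 ≤ 1 / p := one_div_nonneg.2 hp0.le
  rw [cfc_rpow_cfc_eq_cfc_rpowConj hZ (hZΩ.trans hΩ0) hp0.ne' f]
  have hYD := spectrum_cfc_rpow_subset hΩ0 hZ hZΩ hp0.ne'
  have hY : (cfc (fun x : ℝ => x ^ p) Z).IsHermitian := cfc_predicate _ Z
  set Y := cfc (fun x : ℝ => x ^ p) Z
  have hg : ConcaveOn ℝ (rpowDomain p Ω) (rpowConj p f) :=
    concaveOn_rpowConj hΩ0 hf0 hf hgeo hp0 hp1
  have hg0 : ∀ u ∈ rpowDomain p Ω, 0 ≤ rpowConj p f u :=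
    fun u hu => Real.rpow_nonneg (hf0 _ hu.2) p
  have hEYD : spectrum ℝ (E Y) ⊆ rpowDomain p Ω :=
    spectrum_map_subset_of_posSemidef hE hE1 hY hg.1 hYD
  have hEg : (E (cfc (rpowConj p f) Y)).PosSemidef :=
    hE _ (posSemidef_cfc fun u hu => hg0 u (hYD hu))
  have hgE : (cfc (rpowConj p f) (E Y)).PosSemidef := posSemidef_cfc fun u hu => hg0 u (hEYD hu)
  rw [cfc_cfc_rpow_eq_cfc_rpowConj hf0 (isHermitian_map_of_posSemidef hE hY) hEYD hp0.ne',
    prodSmall_cfc_rpow hEg hq, prodSmall_cfc_rpow hgE hq]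
  exact Real.rpow_le_rpow (prodSmall_nonneg hEg k)
    (prodSmall_map_cfc_le_of_concaveOn hE hE1 hY hYD hg0 hg k) hq

end PositiveMap

end SmallestEigenvalues

theorem stmt_1 {n m : ℕ} (E : Matrix (Fin n) (Fin n) ℂ →ₗ[ℂ] Matrix (Fin m) (Fin m) ℂ)
    (hpos : ∀ A : Matrix (Fin n) (Fin n) ℂ, A.PosSemidef → (E A).PosSemidef)
    (hunital : E 1 = 1)
    (f : ℝ → ℝ) (Ω : Set ℝ) (hf : DoublyConcaveOn f Ω)
    (Z : Matrix (Fin n) (Fin n) ℂ) (hZ : Z.IsHermitian) (hΩ : spectrum ℝ Z ⊆ Ω)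
    (p : ℝ) (hp0 : 0 < p) (hp1 : p ≤ 1) :
    ∀ k : ℕ, 1 ≤ k → k ≤ m →
      prodSmall (Ep E p (cfc f Z)) k ≤ prodSmall (cfc f (Ep E p Z)) k := by
  intro k _ _
  exact stmt_1_general (E := E.restrictScalars ℝ) hpos hunital hf.subset_Ici hf.nonneg hf.concaveOn
    hf.geomConcave hZ hΩ hp0 hp1 k
end
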